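/- arXiv:2604.07718 — 6 statements merged into one kernel-verified Lean document; each statement's English description precedes it below -/
import Mathlib

section
/- Let p ≥ 1 and let f : ℝ^p → ℝ^p be a piecewise affine function with associated matrices Φ⁽¹⁾, …, Φ⁽ᴸ⁾ ∈ ℝ^{p×p}. Then for every x′, x″ ∈ ℝ^p there exists a matrix Φ in the convex hull of {Φ⁽¹⁾, …, Φ⁽ᴸ⁾} such that f(x″) − f(x′) = Φ(x″ − x′). -/
open MeasureTheory Matrix

noncomputable section

abbrev E (n : ℕ) : Type := EuclideanSpace ℝ (Fin n)

def mulVecE {m n : ℕ} (A : Matrix (Fin m) (Fin n) ℝ) (x : E n) : E m := WithLp.toLp 2 (A.mulVec x)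

/-- A (continuous) piecewise affine function `f` with regimes `Z`, intercepts `φ`
and coefficient matrices `Φ`: the regimes are convex, nonempty, and partition `ℝ^p`,
and `f z = φ ℓ + Φ ℓ z` on the regime `Z ℓ`. -/
def IsPiecewiseAffine {p L : ℕ} (f : E p → E p) (Z : Fin L → Set (E p))
    (φ : Fin L → E p) (Φ : Fin L → Matrix (Fin p) (Fin p) ℝ) : Prop :=
  Continuous f ∧ (∀ ℓ, Convex ℝ (Z ℓ)) ∧ (∀ ℓ, (Z ℓ).Nonempty) ∧
    (∀ z : E p, ∃! ℓ, z ∈ Z ℓ) ∧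
    ∀ ℓ, ∀ z ∈ Z ℓ, f z = φ ℓ + mulVecE (Φ ℓ) z

/-- The cone `C_I` determined by the vectors `a` and the index set `I`. -/
def coneOf {p : ℕ} (a : Fin p → E p) (I : Set (Fin p)) : Set (E p) :=
  {z | (∀ i ∈ I, 0 ≤ ∑ j, a i j * z j) ∧ (∀ i ∉ I, (∑ j, a i j * z j) < 0)}

/-- A (continuous) piecewise linear function: piecewise affine with zero intercepts, where each
regime is a union of cones `C_I` determined by a fixed basis `a₁, …, a_p` of `ℝ^p`. -/
def IsPiecewiseLinear {p L : ℕ} (f : E p → E p) (Z : Fin L → Set (E p))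
    (φ : Fin L → E p) (Φ : Fin L → Matrix (Fin p) (Fin p) ℝ) : Prop :=
  IsPiecewiseAffine f Z φ Φ ∧ (∀ ℓ, φ ℓ = 0) ∧
    ∃ a : Fin p → E p, LinearIndependent ℝ a ∧ Submodule.span ℝ (Set.range a) = ⊤ ∧
      ∀ ℓ, ∃ S : Set (Set (Fin p)), Z ℓ = ⋃ I ∈ S, coneOf a I

/-- A (continuous) threshold affine function: piecewise affine, whose regimes are the bands
`{z : τ_{ℓ-1} < aᵀz ≤ τ_ℓ}` for some `a ≠ 0` and thresholds `-∞ = τ₀ < τ₁ < ⋯ < τ_L = +∞`. -/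
def IsThresholdAffine {p L : ℕ} (f : E p → E p) (Z : Fin L → Set (E p))
    (φ : Fin L → E p) (Φ : Fin L → Matrix (Fin p) (Fin p) ℝ) : Prop :=
  IsPiecewiseAffine f Z φ Φ ∧
    ∃ a : E p, a ≠ 0 ∧ ∃ τ : Fin (L + 1) → EReal, StrictMono τ ∧
      τ 0 = ⊥ ∧ τ (Fin.last L) = ⊤ ∧
      ∀ ℓ : Fin L, Z ℓ =
        {z : E p | τ ℓ.castSucc < ((∑ j, a j * z j : ℝ) : EReal) ∧
          ((∑ j, a j * z j : ℝ) : EReal) ≤ τ ℓ.succ}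

/-!
Along a segment the map agrees, arbitrarily close to the right of each parameter, with one of
finitely many affine pieces. By continuity that piece also gives the value at the parameter itself,
so the slope of the piece recurs among the right slopes of the map there. By strict separation, if
at every parameter the right slopes keep returning to a closed convex set, then the slope over the
whole segment lies in that set; apply this to the convex hull of the slopes of the pieces.
-/

section Slopes

open Set Filter Topology

variable {F : Type*} [AddCommGroup F] [Module ℝ F] [TopologicalSpace F] [IsTopologicalAddGroup F]
  [ContinuousSMul ℝ F] {a b : ℝ}

theorem slope_le_of_frequently_slope_le {g : ℝ → ℝ} {c : ℝ} (hab : a < b)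
    (hg : ContinuousOn g (Icc a b)) (hslope : ∀ t ∈ Ico a b, ∃ᶠ s in 𝓝[>] t, slope g t s ≤ c) :
    slope g a b ≤ c := by
  have hline (t : ℝ) : HasDerivAt (fun s ↦ g a + c * (s - a)) c t := by
    simpa using (((hasDerivAt_id t).sub_const a).const_mul c).const_add (g a)
  have hle : g b ≤ g a + c * (b - a) :=
    image_le_of_liminf_slope_right_le_deriv_boundary hg (by simp) (by fun_prop)
      (fun t _ ↦ (hline t).hasDerivWithinAt)
      (fun t ht _ hr ↦ (hslope t ht).mono fun _ hs ↦ hs.trans_lt hr) (right_mem_Icc.2 hab.le)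
  rw [slope_def_field, div_le_iff₀ (sub_pos.2 hab)]
  linarith

theorem slope_mem_of_frequently_slope_mem [LocallyConvexSpace ℝ F] {f : ℝ → F} {C : Set F}
    (hab : a < b) (hC : Convex ℝ C) (hC_closed : IsClosed C) (hf : ContinuousOn f (Icc a b))
    (hslope : ∀ t ∈ Ico a b, ∃ᶠ s in 𝓝[>] t, slope f t s ∈ C) : slope f a b ∈ C := by
  by_contra hnot
  obtain ⟨u, c, hu_lt, hlt_u⟩ := geometric_hahn_banach_closed_point hC hC_closed hnot
  have hu_slope (s t : ℝ) : slope (u ∘ f) s t = u (slope f s t) :=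
    u.toLinearMap.slope_comp f s t
  refine hlt_u.not_ge ?_
  rw [← hu_slope]
  refine slope_le_of_frequently_slope_le hab (u.continuous.comp_continuousOn hf) fun t ht ↦ ?_
  exact (hslope t ht).mono fun s hs ↦ (hu_slope t s).trans_le (hu_lt _ hs).le

theorem slope_affineMap {k V : Type*} [Field k] [AddCommGroup V] [Module k V] (A : k →ᵃ[k] V)
    {s t : k} (hst : s ≠ t) : slope A s t = A.linear 1 := by
  have hid : slope (id : k → k) s t = 1 := by
    rw [slope_def_field, id, id, div_self (sub_ne_zero.2 hst.symm)]
  rw [← hid, ← A.slope_comp, Function.comp_id]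

variable [T2Space F] {ι : Type*} [Finite ι]

theorem exists_frequently_slope_eq_linear {f : ℝ → F} {A : ι → ℝ →ᵃ[ℝ] F} {t : ℝ}
    (hf : ContinuousWithinAt f (Ioi t) t) (hA : ∃ᶠ s in 𝓝[>] t, ∃ i, f s = A i s) :
    ∃ i, ∃ᶠ s in 𝓝[>] t, slope f t s = (A i).linear 1 := by
  obtain ⟨i, hi⟩ := frequently_exists.1 hA
  have hA_tendsto : Tendsto (A i) (𝓝[>] t) (𝓝 (A i t)) :=
    (AffineMap.continuous_linear_iff.1
      (A i).linear.continuous_of_finiteDimensional).continuousWithinAt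
  have hft : f t = A i t := tendsto_nhds_unique_of_frequently_eq hf hA_tendsto hi
  refine ⟨i, (hi.and_eventually self_mem_nhdsWithin).mono fun s hs ↦ ?_⟩
  obtain ⟨hfs, hts⟩ := hs
  rw [← slope_affineMap (A i) (ne_of_lt hts), slope_def_module, slope_def_module, hfs, hft]

theorem slope_mem_convexHull_range_linear [LocallyConvexSpace ℝ F] {f : ℝ → F}
    {A : ι → ℝ →ᵃ[ℝ] F} (hab : a < b) (hf : ContinuousOn f (Icc a b))
    (hA : ∀ t ∈ Icc a b, ∃ i, f t = A i t) :
    slope f a b ∈ convexHull ℝ (range fun i ↦ (A i).linear 1) := by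
  refine slope_mem_of_frequently_slope_mem hab (convex_convexHull ℝ _)
    ((finite_range _).isClosed_convexHull ℝ) hf fun t ht ↦ ?_
  have hIcc : Icc a b ∈ 𝓝[>] t := Icc_mem_nhdsGT_of_mem ht
  have hft : ContinuousWithinAt f (Ioi t) t :=
    (hf t (Ico_subset_Icc_self ht)).mono_of_mem_nhdsWithin hIcc
  have hAt : ∀ᶠ s in 𝓝[>] t, ∃ i, f s = A i s := mem_of_superset hIcc hA
  obtain ⟨i, hi⟩ := exists_frequently_slope_eq_linear hft hAt.frequently
  exact hi.mono fun s hs ↦ hs ▸ subset_convexHull ℝ _ (mem_range_self i)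

end Slopes

theorem mem_convexHull_range_comp_iff {R V W ι : Type*} [Semiring R] [PartialOrder R]
    [AddCommMonoid V] [Module R V] [AddCommMonoid W] [Module R W]
    (T : V →ₗ[R] W) (v : ι → V) {w : W} :
    w ∈ convexHull R (Set.range fun i ↦ T (v i)) ↔ ∃ x ∈ convexHull R (Set.range v), T x = w := by
  rw [← Set.mem_image, T.image_convexHull, ← Set.range_comp]
  rfl

theorem piecewise_affine_convex_hull_difference_general {ι V F : Type*} [Finite ι]
    [AddCommGroup V] [Module ℝ V] [TopologicalSpace V] [IsTopologicalAddGroup V]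
    [ContinuousSMul ℝ V] [AddCommGroup F] [Module ℝ F] [TopologicalSpace F]
    [IsTopologicalAddGroup F] [ContinuousSMul ℝ F] [LocallyConvexSpace ℝ F] [T2Space F]
    {f : V → F} {A : ι → V →ᵃ[ℝ] F} {x y : V} (hf : ContinuousOn f (segment ℝ x y))
    (hA : ∀ z ∈ segment ℝ x y, ∃ i, f z = A i z) :
    ∃ Φ ∈ convexHull ℝ (Set.range fun i ↦ (A i).linear), f y - f x = Φ (y - x) := by
  let γ : ℝ →ᵃ[ℝ] V := AffineMap.lineMap x y
  have hγ : Set.MapsTo γ (Set.Icc 0 1) (segment ℝ x y) := by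
    rw [segment_eq_image_lineMap]
    exact Set.mapsTo_image _ _
  have hslope : slope (f ∘ γ) 0 1 ∈
      convexHull ℝ (Set.range fun i ↦ ((A i).comp γ).linear 1) :=
    slope_mem_convexHull_range_linear zero_lt_one
      (hf.comp AffineMap.lineMap_continuous.continuousOn hγ) fun t ht ↦ hA (γ t) (hγ ht)
  have hdiff : slope (f ∘ γ) 0 1 = f y - f x := by simp [slope_def_module, γ]
  have hdir (i : ι) : ((A i).comp γ).linear 1 = LinearMap.applyₗ (y - x) (A i).linear := by
    simp only [γ, AffineMap.comp_linear, AffineMap.lineMap_linear, LinearMap.comp_apply,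
      LinearMap.smulRight_apply, LinearMap.id_apply, one_smul, vsub_eq_sub,
      LinearMap.applyₗ_apply_apply]
  simp only [hdiff, hdir, mem_convexHull_range_comp_iff] at hslope
  obtain ⟨Φ, hΦ, hΦ_eq⟩ := hslope
  exact ⟨Φ, hΦ, hΦ_eq.symm⟩

/-- The affine map `z ↦ φ + Φ z` by which a piecewise affine function is given on a regime with
intercept `φ` and coefficient matrix `Φ`, extended to the whole space. -/
def regimeAffineMap {m n : ℕ} (φ : E m) (Φ : Matrix (Fin m) (Fin n) ℝ) : E n →ᵃ[ℝ] E m where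
  toFun z := φ + mulVecE Φ z
  linear := Matrix.toEuclideanLin Φ
  map_vadd' z v := by
    change φ + Matrix.toEuclideanLin Φ (v + z) =
      Matrix.toEuclideanLin Φ v + (φ + Matrix.toEuclideanLin Φ z)
    rw [map_add, add_left_comm]

theorem IsPiecewiseAffine.exists_eq_regimeAffineMap {p L : ℕ} {f : E p → E p}
    {Z : Fin L → Set (E p)} {φ : Fin L → E p} {Φ : Fin L → Matrix (Fin p) (Fin p) ℝ}
    (hf : IsPiecewiseAffine f Z φ Φ) (z : E p) : ∃ ℓ, f z = regimeAffineMap (φ ℓ) (Φ ℓ) z := by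
  obtain ⟨-, -, -, hpartition, haffine⟩ := hf
  obtain ⟨ℓ, hℓ, -⟩ := hpartition z
  exact ⟨ℓ, haffine ℓ z hℓ⟩

theorem mem_convexHull_range_linear_regimeAffineMap_iff {m n : ℕ} {ι : Type*} {φ : ι → E m}
    {Φ : ι → Matrix (Fin m) (Fin n) ℝ} {T : E n →ₗ[ℝ] E m} :
    T ∈ convexHull ℝ (Set.range fun i ↦ (regimeAffineMap (φ i) (Φ i)).linear) ↔
      ∃ M ∈ convexHull ℝ (Set.range Φ), Matrix.toEuclideanLin M = T :=
  mem_convexHull_range_comp_iff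
    (Matrix.toEuclideanLin (𝕜 := ℝ) (m := Fin m) (n := Fin n)).toLinearMap Φ

/-- **Mean-value property of piecewise affine maps** (Lemma `lem:pwa-conhull`): the difference
`f(x″) − f(x′)` equals `Φ (x″ − x′)` for some `Φ` in the convex hull of the regime matrices. -/
theorem piecewise_affine_convex_hull_difference
    (p L : ℕ) (hp : 1 ≤ p) (hL : 1 ≤ L)
    (f : E p → E p) (Z : Fin L → Set (E p)) (φ : Fin L → E p)
    (Φ : Fin L → Matrix (Fin p) (Fin p) ℝ)
    (hf : IsPiecewiseAffine f Z φ Φ) :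
    ∀ x' x'' : E p, ∃ M ∈ convexHull ℝ (Set.range Φ),
      f x'' - f x' = mulVecE M (x'' - x') := by
  intro x' x''
  obtain ⟨_, hT, hdiff⟩ := piecewise_affine_convex_hull_difference_general
    hf.1.continuousOn fun z (_ : z ∈ segment ℝ x' x'') ↦ hf.exists_eq_regimeAffineMap z
  obtain ⟨M, hM, rfl⟩ := mem_convexHull_range_linear_regimeAffineMap_iff.1 hT
  exact ⟨M, hM, hdiff⟩
end
end

section
/- Let k, ℓ ≥ 1, let g : ℝ^k → ℝ^ℓ be locally Lipschitz, and let B ∈ ℝ^{ℓ×k}. If for Lebesgue-almost every x ∈ ℝ^k, g is differentiable at x with Dg(x) = B, then there exists a ∈ ℝ^ℓ such that g(x) = a + Bx for all x ∈ ℝ^k. -/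
open MeasureTheory Matrix

noncomputable section

/-!
By Fubini, for each direction `v` the derivative hypothesis holds almost everywhere on almost every
line parallel to `v`. On such a line the map is absolutely continuous with constant derivative, so
it is affine there. This gives `f (x + v) = f x + L v` for almost every `x`, hence for every `x` by
continuity, and `x = 0` shows that `f` is affine.
-/

section LineRestriction

variable {𝕜 V W : Type*} [NontriviallyNormedField 𝕜] [NormedAddCommGroup W] [NormedSpace 𝕜 W]

theorem ae_ae_add_linearMap_of_ae [CompleteSpace 𝕜] [NormedAddCommGroup V] [NormedSpace 𝕜 V]
    [MeasurableSpace V] [BorelSpace V] [LocallyCompactSpace V]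
    [MeasurableSpace W] [BorelSpace W] [LocallyCompactSpace W]
    (L : V →ₗ[𝕜] W) (μ : Measure V) [μ.IsAddHaarMeasure] {ν : Measure W} [ν.IsAddHaarMeasure]
    {p : W → Prop} (hp : ∀ᵐ y ∂ν, p y) : ∀ᵐ y ∂ν, ∀ᵐ x ∂μ, p (y + L x) := by
  obtain ⟨s, hs, hs_meas, hsp⟩ := hp.exists_measurable_mem
  filter_upwards [(ae_ae_add_linearMap_mem_iff L μ ν hs_meas).2 hs] with y hy
  exact hy.mono fun x hx ↦ hsp _ hx

theorem hasDerivAt_comp_add_smul_of_hasLineDerivAt [AddCommGroup V] [Module 𝕜 V]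
    {f : V → W} {w : W} {x v : V} {t : 𝕜} (hf : HasLineDerivAt 𝕜 f w (x + t • v) v) :
    HasDerivAt (fun s : 𝕜 ↦ f (x + s • v)) w t := by
  have hf₀ : HasDerivAt (fun s : 𝕜 ↦ f (x + t • v + s • v)) w (t - t) := by
    rwa [sub_self]
  simpa [add_assoc, ← add_smul] using hf₀.comp_sub_const t t

end LineRestriction

theorem absolutelyContinuousOnInterval_of_locallyLipschitzOn {X : Type*} [PseudoMetricSpace X]
    {f : ℝ → X} {a b : ℝ} (hf : LocallyLipschitzOn (Set.uIcc a b) f) :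
    AbsolutelyContinuousOnInterval f a b :=
  let ⟨_, hK⟩ := hf.exists_lipschitzOnWith_of_compact isCompact_uIcc
  hK.absolutelyContinuousOnInterval

theorem eq_add_sub_smul_of_ae_hasDerivAt {F : Type*} [NormedAddCommGroup F] [NormedSpace ℝ F]
    {f : ℝ → F} {a b : ℝ} (hf : AbsolutelyContinuousOnInterval f a b) {w : F}
    (hw : ∀ᵐ t, t ∈ Set.uIcc a b → HasDerivAt f w t) : f b = f a + (b - a) • w := by
  have hlin (t : ℝ) : HasDerivAt (fun s : ℝ ↦ s • w) w t := by
    simpa using (hasDerivAt_id t).smul_const w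
  have hlin_ac : AbsolutelyContinuousOnInterval (fun s : ℝ ↦ s • w) a b :=
    absolutelyContinuousOnInterval_of_locallyLipschitzOn
      (ContinuousLinearMap.toSpanSingleton ℝ w).lipschitz.locallyLipschitz.locallyLipschitzOn
  obtain ⟨C, hC⟩ := (hf.sub hlin_ac).const_of_ae_hasDerivAt_zero <|
    hw.mono fun t ht htab ↦ by simpa only [sub_self] using (ht htab).sub (hlin t)
  have hab : f b - b • w = f a - a • w :=
    (hC b Set.right_mem_uIcc).trans (hC a Set.left_mem_uIcc).symm
  rw [sub_eq_iff_eq_add.1 hab, sub_smul]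
  abel

section FiniteDimensional

variable {V F : Type*} [NormedAddCommGroup V] [NormedSpace ℝ V] [FiniteDimensional ℝ V]
  [MeasurableSpace V] [BorelSpace V] [NormedAddCommGroup F] [NormedSpace ℝ F]
  {μ : Measure V} [μ.IsAddHaarMeasure] {f : V → F}

theorem ae_add_eq_add_of_ae_hasLineDerivAt (hf : LocallyLipschitz f) {v : V} {w : F}
    (hw : ∀ᵐ x ∂μ, HasLineDerivAt ℝ f w x v) : ∀ᵐ x ∂μ, f (x + v) = f x + w := by
  filter_upwards [ae_ae_add_linearMap_of_ae (LinearMap.toSpanSingleton ℝ V v) volume hw] with x hx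
  have hline : LocallyLipschitz fun t : ℝ ↦ f (x + t • v) :=
    hf.comp <| (LocallyLipschitz.const x).add
      (ContinuousLinearMap.toSpanSingleton ℝ v).lipschitz.locallyLipschitz
  have hline_ac : AbsolutelyContinuousOnInterval (fun t : ℝ ↦ f (x + t • v)) 0 1 :=
    absolutelyContinuousOnInterval_of_locallyLipschitzOn hline.locallyLipschitzOn
  simpa using eq_add_sub_smul_of_ae_hasDerivAt hline_ac <|
    hx.mono fun t ht _ ↦ hasDerivAt_comp_add_smul_of_hasLineDerivAt ht

theorem add_eq_add_of_ae_hasLineDerivAt (hf : LocallyLipschitz f) {v : V} {w : F}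
    (hw : ∀ᵐ x ∂μ, HasLineDerivAt ℝ f w x v) (x : V) : f (x + v) = f x + w := by
  have hf_cont : Continuous f := hf.continuous
  exact congrFun (Measure.eq_of_ae_eq (ae_add_eq_add_of_ae_hasLineDerivAt hf hw)
    (by fun_prop) (by fun_prop)) x

theorem locally_lipschitz_ae_constant_deriv_affine_general (hf : LocallyLipschitz f)
    (L : V →L[ℝ] F) (hL : ∀ᵐ x ∂μ, HasFDerivAt f L x) : ∃ a : F, ∀ x : V, f x = a + L x := by
  refine ⟨f 0, fun x ↦ ?_⟩
  have hLx : ∀ᵐ y ∂μ, HasLineDerivAt ℝ f (L x) y x := hL.mono fun y hy ↦ hy.hasLineDerivAt x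
  simpa only [zero_add] using add_eq_add_of_ae_hasLineDerivAt hf hLx 0

end FiniteDimensional

/-- **Lemma `lem:lipschitz` (3)**: a locally Lipschitz map whose Jacobian equals the constant
matrix `B` almost everywhere is affine, `g(x) = a + Bx`. -/
theorem locally_lipschitz_ae_constant_deriv_affine
    (k l : ℕ) (hk : 1 ≤ k) (hl : 1 ≤ l)
    (g : E k → E l) (hg : LocallyLipschitz g)
    (B : Matrix (Fin l) (Fin k) ℝ)
    (hB : ∀ᵐ x : E k, DifferentiableAt ℝ g x ∧ ∀ v : E k, fderiv ℝ g x v = mulVecE B v) :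
    ∃ a : E l, ∀ x : E k, g x = a + mulVecE B x :=
  locally_lipschitz_ae_constant_deriv_affine_general hg (toEuclideanLin B).toContinuousLinearMap <|
    hB.mono fun _ ⟨hd, hv⟩ ↦ hd.hasFDerivAt.congr_fderiv (ContinuousLinearMap.ext hv)
end
end

section
/- Let k ≥ 2 and let g : ℝ^k → ℝ^k be locally Lipschitz. If for Lebesgue-almost every x ∈ ℝ^k, g is differentiable at x with Dg(x) ∈ SO(k), then there exist a ∈ ℝ^k and Q ∈ SO(k) such that g(x) = a + Qx for all x ∈ ℝ^k. -/
open MeasureTheory Matrix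

noncomputable section

/-!
The determinant is a null Lagrangian: if two Lipschitz maps `f`, `g` agree off a set `s` of finite
measure, then `∫ x in s, det Df = ∫ x in s, det Dg`. For large `t` the maps `f + t • id` and
`g + t • id` are bijections, so they have the same image of `s`, and the area formula gives
`∫ x in s, det (Df + t) = ∫ x in s, det (Dg + t)`; both sides are polynomials in `t`, hence they
also agree at `t = 0`.

Apply this to `g` and `g + ψ • v` with `ψ` supported in `s`. Where `Dg` is a rotation it is its own
cofactor matrix, so `det D(g + ψ • v) = 1 + ⟪Dg ∇ψ, v⟫`, whence `∫ x in s, Dg ∇ψ = 0`: the map `g`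
is weakly harmonic. Testing with `ψ z = (r ^ 2 - ‖z - x‖ ^ 2)₊` shows that the averages of `g` over
the balls about `x` do not depend on the radius, so `g` has the mean value property.

Finally `‖Dg‖ ≤ 1` almost everywhere makes `g` globally `1`-Lipschitz, so each difference
`g (· + h) - g` is bounded and has the mean value property. By Liouville's theorem it is constant,
and a continuous map with constant differences is affine.
-/

open Set Metric Module Filter Function Topology
open scoped NNReal Pointwise Gradient RealInnerProductSpace

theorem det_eq_sum_lagrangeBasis_mul_det_add_smul_id {K V ι : Type*} [Field K] [AddCommGroup V]
    [Module K V] [FiniteDimensional K V] [Fintype ι] [DecidableEq ι] {v : ι → K} (hv : Injective v)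
    (hι : finrank K V < Fintype.card ι) (A : V →ₗ[K] V) :
    A.det = ∑ j, (Lagrange.basis Finset.univ v j).eval 0 * (A + v j • LinearMap.id).det := by
  have eval_charpoly (t : K) : (-A).charpoly.eval t = (A + t • LinearMap.id).det := by
    rw [LinearMap.eval_charpoly, sub_neg_eq_add, add_comm]
    rfl
  have degree_lt : (-A).charpoly.degree < (Finset.univ : Finset ι).card := by
    refine Polynomial.degree_le_natDegree.trans_lt ?_
    rw [LinearMap.charpoly_natDegree]
    exact_mod_cast hι
  calc A.det = (-A).charpoly.eval 0 := by simp [eval_charpoly]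
    _ = _ := by
      rw [Lagrange.eq_interpolate hv.injOn degree_lt, Lagrange.interpolate_apply,
        Polynomial.eval_finsetSum]
      simp [eval_charpoly, mul_comm]

section NormedSpace

variable {V : Type*} [NormedAddCommGroup V] [NormedSpace ℝ V]

theorem bijective_add_smul_of_lipschitzWith [CompleteSpace V] {f : V → V} {C : ℝ≥0} {t : ℝ}
    (hf : LipschitzWith C f) (ht : C < t) : Bijective fun x ↦ f x + t • x := by
  have t_pos : 0 < t := C.2.trans_lt ht
  refine (bijective_iff_existsUnique _).2 fun y ↦ ?_
  have contracting : ContractingWith (C / t.toNNReal) fun x ↦ t⁻¹ • (y - f x) := by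
    refine ⟨?_, LipschitzWith.of_dist_le_mul fun x x' ↦ ?_⟩
    · rw [div_lt_one (by simpa), ← NNReal.coe_lt_coe, Real.coe_toNNReal _ t_pos.le]
      exact ht
    · rw [dist_smul₀, dist_sub_left, Real.norm_of_nonneg (by positivity), NNReal.coe_div,
        Real.coe_toNNReal _ t_pos.le, div_eq_inv_mul, mul_assoc]
      gcongr
      exact hf.dist_le_mul x x'
  have eq_iff (x : V) : f x + t • x = y ↔ IsFixedPt (fun x ↦ t⁻¹ • (y - f x)) x := by
    rw [IsFixedPt, inv_smul_eq_iff₀ t_pos.ne', sub_eq_iff_eq_add', eq_comm]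
  simp only [eq_iff]
  exact ⟨_, contracting.fixedPoint_isFixedPt, fun x hx ↦ contracting.fixedPoint_unique hx⟩

theorem image_add_smul_eq_of_eqOn_compl [CompleteSpace V] {f g : V → V} {C : ℝ≥0}
    (hf : LipschitzWith C f) (hg : LipschitzWith C g) {s : Set V} (hfg : EqOn f g sᶜ) {t : ℝ}
    (ht : C < t) : (fun x ↦ f x + t • x) '' s = (fun x ↦ g x + t • x) '' s := by
  rw [← compl_inj_iff, ← image_compl_eq (bijective_add_smul_of_lipschitzWith hf ht),
    ← image_compl_eq (bijective_add_smul_of_lipschitzWith hg ht)]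
  exact image_congr fun x hx ↦ by rw [hfg hx]

variable [FiniteDimensional ℝ V]

theorem det_add_smul_id_pos_of_opNorm_lt {A : V →L[ℝ] V} {t : ℝ} (hA : ‖A‖ < t) :
    0 < (A + t • ContinuousLinearMap.id ℝ V).det := by
  have t_pos : 0 < t := (norm_nonneg A).trans_lt hA
  let F : ℝ → ℝ := fun r ↦ (r • A + t • ContinuousLinearMap.id ℝ V).det
  have F_continuous : Continuous F := ContinuousLinearMap.continuous_det.comp (by fun_prop)
  have F_ne_zero : ∀ r ∈ Icc (0 : ℝ) 1, F r ≠ 0 := by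
    intro r hr hF
    obtain ⟨x, hx, x_ne⟩ := Submodule.exists_mem_ne_zero_of_ne_bot
      (LinearMap.bot_lt_ker_of_det_eq_zero hF).ne'
    have hx' : r • A x + t • x = 0 := by simpa using hx
    have norm_eq : t * ‖x‖ = r * ‖A x‖ := by
      rw [← Real.norm_of_nonneg t_pos.le, ← norm_smul, ← Real.norm_of_nonneg hr.1, ← norm_smul,
        ← norm_neg, neg_eq_of_add_eq_zero_left hx']
    have norm_lt : r * ‖A x‖ < t * ‖x‖ := calc
      r * ‖A x‖ ≤ ‖A x‖ := mul_le_of_le_one_left (norm_nonneg _) hr.2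
      _ ≤ ‖A‖ * ‖x‖ := A.le_opNorm x
      _ < t * ‖x‖ := by gcongr
    exact norm_lt.ne' norm_eq
  have F_zero_pos : 0 < F 0 := by
    have : F 0 = t ^ finrank ℝ V := by simp [F, ContinuousLinearMap.det]
    rw [this]
    positivity
  suffices 0 < F 1 by simpa [F] using this
  by_contra! F_one
  obtain ⟨r, hr, hF⟩ := intermediate_value_Icc' zero_le_one F_continuous.continuousOn
    ⟨F_one, F_zero_pos.le⟩
  exact F_ne_zero r hr hF

theorem integrableOn_det {X : Type*} [MeasurableSpace X] {ν : Measure X} {A : X → V →L[ℝ] V}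
    (hA : Measurable A) {C : ℝ} (hC : ∀ x, ‖A x‖ ≤ C) {s : Set X} (hs : ν s ≠ ⊤) :
    IntegrableOn (fun x ↦ (A x).det) s ν := by
  obtain ⟨D, hD⟩ := (isCompact_closedBall (0 : V →L[ℝ] V) C).exists_bound_of_continuousOn
    (ContinuousLinearMap.continuous_det (𝕜 := ℝ) (E := V)).continuousOn
  refine .of_bound hs.lt_top
    (ContinuousLinearMap.continuous_det.measurable.comp hA).aestronglyMeasurable D
    (.of_forall fun x ↦ hD _ ?_)
  simpa using hC x

variable [MeasurableSpace V] [BorelSpace V] (μ : Measure V) [μ.IsAddHaarMeasure]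

theorem addHaar_image_eq_zero_of_lipschitzWith {f : V → V} {C : ℝ≥0} (hf : LipschitzWith C f)
    {s : Set V} (hs : μ s = 0) : μ (f '' s) = 0 := by
  have := isAddHaarMeasure_hausdorffMeasure (E := V)
  have μH_zero : Measure.hausdorffMeasure (finrank ℝ V) s = 0 :=
    Measure.absolutelyContinuous_isAddHaarMeasure _ μ hs
  refine Measure.absolutelyContinuous_isAddHaarMeasure μ
    (Measure.hausdorffMeasure (finrank ℝ V)) ?_
  simpa [μH_zero] using hf.hausdorffMeasure_image_le (d := finrank ℝ V) (by positivity) s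

theorem integral_abs_det_fderiv_eq_addHaar_real_image {f : V → V} {C : ℝ≥0}
    (hf : LipschitzWith C f) {s : Set V} (hs : MeasurableSet s) (hfs : InjOn f s) :
    ∫ x in s, |(fderiv ℝ f x).det| ∂μ = μ.real (f '' s) := by
  set D := {x | DifferentiableAt ℝ f x}
  have measurable_inter : MeasurableSet (s ∩ D) :=
    hs.inter (measurableSet_of_differentiableAt ℝ f)
  have null_diff : μ (s \ D) = 0 :=
    measure_mono_null (fun _ hx ↦ hx.2) hf.ae_differentiableAt
  have image_eq : f '' s = f '' (s ∩ D) ∪ f '' (s \ D) := by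
    rw [← image_union, inter_union_sdiff]
  calc ∫ x in s, |(fderiv ℝ f x).det| ∂μ = ∫ x in s ∩ D, |(fderiv ℝ f x).det| ∂μ :=
        setIntegral_congr_set (inter_ae_eq_left_of_ae_eq_univ
          (eventuallyEq_univ.2 hf.ae_differentiableAt)).symm
    _ = ∫ _ in f '' (s ∩ D), (1 : ℝ) ∂μ := by
        rw [integral_image_eq_integral_abs_det_fderiv_smul μ measurable_inter
          (fun x hx ↦ hx.2.hasFDerivAt.hasFDerivWithinAt) (hfs.mono inter_subset_left)]
        simp
    _ = μ.real (f '' (s ∩ D)) := by simp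
    _ = μ.real (f '' s) := by
        rw [image_eq]
        exact measureReal_congr (union_ae_eq_left_of_ae_eq_empty
          (ae_eq_empty.2 (addHaar_image_eq_zero_of_lipschitzWith μ hf null_diff))).symm

variable {μ}

theorem setIntegral_det_fderiv_add_smul_id {f : V → V} {C : ℝ≥0} (hf : LipschitzWith C f)
    {s : Set V} (hs : MeasurableSet s) {t : ℝ} (ht : C < t) :
    ∫ x in s, (fderiv ℝ f x + t • ContinuousLinearMap.id ℝ V).det ∂μ =
      μ.real ((fun x ↦ f x + t • x) '' s) := by
  rw [← integral_abs_det_fderiv_eq_addHaar_real_image μ (hf.add (lipschitzWith_smul t)) hs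
    (bijective_add_smul_of_lipschitzWith hf ht).injective.injOn]
  refine integral_congr_ae (ae_restrict_of_ae ?_)
  filter_upwards [hf.ae_differentiableAt] with x hx
  have fderiv_eq : fderiv ℝ (fun x ↦ f x + t • x) x =
      fderiv ℝ f x + t • ContinuousLinearMap.id ℝ V :=
    (hx.hasFDerivAt.add ((hasFDerivAt_id x).const_smul t)).fderiv
  rw [fderiv_eq, abs_of_pos]
  exact det_add_smul_id_pos_of_opNorm_lt
    ((norm_fderiv_le_of_lipschitz ℝ hf).trans_lt ht)

theorem setIntegral_det_fderiv_eq_sum_lagrangeBasis_mul {f : V → V} {C : ℝ≥0}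
    (hf : LipschitzWith C f) {s : Set V} (hs : MeasurableSet s) (hμs : μ s ≠ ⊤) {ι : Type*}
    [Fintype ι] [DecidableEq ι] {v : ι → ℝ} (hv : Injective v)
    (hι : finrank ℝ V < Fintype.card ι) (hCv : ∀ j, C < v j) :
    ∫ x in s, (fderiv ℝ f x).det ∂μ = ∑ j, (Lagrange.basis Finset.univ v j).eval 0 *
      μ.real ((fun x ↦ f x + v j • x) '' s) := by
  have integrable (j) : IntegrableOn
      (fun x ↦ (fderiv ℝ f x + v j • ContinuousLinearMap.id ℝ V).det) s μ :=
    integrableOn_det ((measurable_fderiv ℝ f).add_const _)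
      (fun x ↦ norm_add_le_of_le (norm_fderiv_le_of_lipschitz ℝ hf) le_rfl) hμs
  calc ∫ x in s, (fderiv ℝ f x).det ∂μ
      = ∫ x in s, ∑ j, (Lagrange.basis Finset.univ v j).eval 0 *
          (fderiv ℝ f x + v j • ContinuousLinearMap.id ℝ V).det ∂μ :=
        integral_congr_ae (.of_forall fun x ↦
          det_eq_sum_lagrangeBasis_mul_det_add_smul_id hv hι (fderiv ℝ f x : V →ₗ[ℝ] V))
    _ = ∑ j, (Lagrange.basis Finset.univ v j).eval 0 *
          ∫ x in s, (fderiv ℝ f x + v j • ContinuousLinearMap.id ℝ V).det ∂μ := by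
        rw [integral_finsetSum _ fun j _ ↦ (integrable j).const_mul _]
        simp_rw [integral_const_mul]
    _ = _ := by simp_rw [setIntegral_det_fderiv_add_smul_id hf hs (hCv _)]

theorem setIntegral_det_fderiv_eq_of_eqOn_compl {f g : V → V} {C : ℝ≥0}
    (hf : LipschitzWith C f) (hg : LipschitzWith C g) {s : Set V} (hs : MeasurableSet s)
    (hμs : μ s ≠ ⊤) (hfg : EqOn f g sᶜ) :
    ∫ x in s, (fderiv ℝ f x).det ∂μ = ∫ x in s, (fderiv ℝ g x).det ∂μ := by
  let v : Fin (finrank ℝ V + 1) → ℝ := fun j ↦ C + 1 + (j : ℕ)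
  have v_injective : Injective v := fun i j hij ↦ Fin.ext (by simpa [v] using hij)
  have lt_v (j) : C < v j := by
    have : (0 : ℝ) ≤ (j : ℕ) := Nat.cast_nonneg _
    simp only [v]
    linarith
  rw [setIntegral_det_fderiv_eq_sum_lagrangeBasis_mul hf hs hμs v_injective (by simp) lt_v,
    setIntegral_det_fderiv_eq_sum_lagrangeBasis_mul hg hs hμs v_injective (by simp) lt_v]
  simp_rw [image_add_smul_eq_of_eqOn_compl hf hg hfg (lt_v _)]

end NormedSpace

section MetricSpace

variable {X F : Type*} [MeasurableSpace X] [NormedAddCommGroup F] [NormedSpace ℝ F]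
  {μ : Measure X} {f g : X → F}

theorem norm_setAverage_le_of_ae_norm_le {s : Set X} (hs : μ s ≠ ⊤) {C : ℝ} (hC : 0 ≤ C)
    (hf : ∀ᵐ x ∂μ.restrict s, ‖f x‖ ≤ C) : ‖⨍ x in s, f x ∂μ‖ ≤ C := by
  rw [setAverage_eq, norm_smul, norm_inv, Real.norm_of_nonneg measureReal_nonneg]
  refine inv_mul_le_of_le_mul₀ measureReal_nonneg hC ?_
  rw [mul_comm]
  exact norm_setIntegral_le_of_norm_le_const_ae hs.lt_top hf

variable [PseudoMetricSpace X]

/-- `f` has the mean value property with respect to `μ`: its value at each point is its average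
over every closed ball centred there. In Euclidean space this characterizes the continuous
functions that are harmonic on the whole space. The average of a non-integrable function is the
junk value `0`, so the property is meant for locally integrable `f`. -/
def HasMeanValueProperty (μ : Measure X) (f : X → F) : Prop :=
  ∀ x, ∀ r > 0, ⨍ y in closedBall x r, f y ∂μ = f x

theorem HasMeanValueProperty.sub [ProperSpace X] (hf : HasMeanValueProperty μ f)
    (hg : HasMeanValueProperty μ g) (hfi : LocallyIntegrable f μ) (hgi : LocallyIntegrable g μ) :
    HasMeanValueProperty μ fun x ↦ f x - g x := by
  intro x r hr
  rw [setAverage_eq, integral_sub (hfi.integrableOn_isCompact (isCompact_closedBall x r))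
    (hgi.integrableOn_isCompact (isCompact_closedBall x r)), smul_sub, ← setAverage_eq,
    ← setAverage_eq, hf x r hr, hg x r hr]

end MetricSpace

section Averages

variable {V : Type*} [NormedAddCommGroup V] [NormedSpace ℝ V]

theorem lipschitzOnWith_comp_add_smul {Y : Type*} [PseudoMetricSpace Y] {g : V → Y} {K : ℝ≥0}
    {u : Set V} (hg : LipschitzOnWith K g u) {a b : V} {D : ℝ} (hb : ‖b‖ ≤ D) {I : Set ℝ}
    (hI : ∀ t ∈ I, a + t • b ∈ u) :
    LipschitzOnWith (Real.nnabs (K * D)) (fun t : ℝ ↦ g (a + t • b)) I := by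
  have D_nonneg : 0 ≤ D := (norm_nonneg _).trans hb
  refine LipschitzOnWith.of_dist_le_mul fun t ht t' ht' ↦ ?_
  rw [Real.coe_nnabs, abs_of_nonneg (by positivity)]
  calc dist (g (a + t • b)) (g (a + t' • b))
      ≤ K * dist (a + t • b) (a + t' • b) := hg.dist_le_mul _ (hI t ht) _ (hI t' ht')
    _ = K * (dist t t' * ‖b‖) := by
        rw [dist_add_left, dist_eq_norm, ← sub_smul, norm_smul, ← dist_eq_norm]
    _ ≤ K * (dist t t' * D) := by gcongr
    _ = K * D * dist t t' := by ring

variable {F : Type*} [NormedAddCommGroup F] [NormedSpace ℝ F]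
  [FiniteDimensional ℝ V] [MeasurableSpace V] [BorelSpace V]

theorem hasDerivAt_setAverage_comp_add_smul [FiniteDimensional ℝ F] {X : Type*}
    [TopologicalSpace X] [T2Space X] [MeasurableSpace X] [OpensMeasurableSpace X] {ν : Measure X}
    [IsFiniteMeasureOnCompacts ν] {s : Set X} (hs : IsCompact s) {g : V → F}
    (hg : LocallyLipschitz g) {a b : X → V} (ha : Continuous a) (hb : Continuous b) {t₀ : ℝ}
    (hd : ∀ᵐ y ∂ν.restrict s, DifferentiableAt ℝ g (a y + t₀ • b y)) :
    HasDerivAt (fun t ↦ ⨍ y in s, g (a y + t • b y) ∂ν)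
      (⨍ y in s, fderiv ℝ g (a y + t₀ • b y) (b y) ∂ν) t₀ := by
  have : CompleteSpace F := FiniteDimensional.complete ℝ F
  simp_rw [setAverage_eq]
  refine HasDerivAt.const_smul _ ?_
  let I : Set ℝ := Icc (t₀ - 1) (t₀ + 1)
  obtain ⟨K, hK⟩ := (hg.locallyLipschitzOn (s := (fun q : ℝ × X ↦ a q.2 + q.1 • b q.2) ''
    (I ×ˢ s))).exists_lipschitzOnWith_of_compact ((isCompact_Icc.prod hs).image (by fun_prop))
  obtain ⟨D, hD⟩ := hs.exists_bound_of_continuousOn hb.continuousOn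
  have continuous_comp (t : ℝ) : Continuous fun y ↦ g (a y + t • b y) :=
    hg.continuous.comp (by fun_prop)
  have continuous_line : Continuous fun y ↦ a y + t₀ • b y := by fun_prop
  have measurable_deriv :
      AEStronglyMeasurable (fun y ↦ fderiv ℝ g (a y + t₀ • b y) (b y)) (ν.restrict s) := by
    borelize F
    exact (isBoundedBilinearMap_apply.continuous.measurable.comp
      (((measurable_fderiv ℝ g).comp continuous_line.measurable).prodMk
        hb.measurable)).aestronglyMeasurable
  have lipschitz_in_t (y) (hy : y ∈ s) :
      LipschitzOnWith (Real.nnabs (K * D)) (fun t ↦ g (a y + t • b y)) I :=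
    lipschitzOnWith_comp_add_smul hK (hD y hy) fun t ht ↦ ⟨(t, y), ⟨ht, hy⟩, rfl⟩
  refine (hasDerivAt_integral_of_dominated_loc_of_lip (𝕜 := ℝ) (bound := fun _ ↦ K * D)
    (Icc_mem_nhds (by linarith) (by linarith))
    (.of_forall fun t ↦ (continuous_comp t).aestronglyMeasurable)
    ((continuous_comp t₀).continuousOn.integrableOn_compact hs) measurable_deriv
    ((ae_restrict_mem hs.measurableSet).mono lipschitz_in_t)
    (integrableOn_const hs.measure_ne_top) ?_).2
  filter_upwards [hd] with y hy
  refine hy.hasFDerivAt.comp_hasDerivAt t₀ ?_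
  simpa using ((hasDerivAt_id t₀).smul_const (b y)).const_add (a y)

variable (μ : Measure V) [μ.IsAddHaarMeasure]

theorem ae_comp_add_smul {p : V → Prop} (hp : ∀ᵐ x ∂μ, p x) (x : V) {r : ℝ} (hr : r ≠ 0) :
    ∀ᵐ y ∂μ, p (x + r • y) :=
  ((measurePreserving_add_left μ x).quasiMeasurePreserving.comp
    (Measure.quasiMeasurePreserving_smul μ hr)).ae hp

theorem setAverage_closedBall_eq (f : V → F) (x : V) {r : ℝ} (hr : 0 < r) :
    ⨍ y in closedBall x r, f y ∂μ = ⨍ y in closedBall 0 1, f (x + r • y) ∂μ := by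
  have preimage_eq : (x + ·) ⁻¹' closedBall x r = r • closedBall (0 : V) 1 := by
    rw [preimage_add_closedBall, sub_self, smul_unitClosedBall_of_nonneg hr.le]
  have integral_eq : ∫ y in closedBall 0 1, f (x + r • y) ∂μ =
      (r ^ finrank ℝ V)⁻¹ • ∫ y in closedBall x r, f y ∂μ := by
    rw [Measure.setIntegral_comp_smul_of_pos μ (fun y ↦ f (x + y)) _ hr, ← preimage_eq,
      (measurePreserving_add_left μ x).setIntegral_preimage_emb (measurableEmbedding_addLeft x)]
  rw [setAverage_eq, setAverage_eq, integral_eq, smul_smul,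
    Measure.addHaar_real_closedBall μ x hr.le, Measure.addHaar_real_closedBall μ 0 zero_le_one,
    one_pow, one_mul, mul_inv, mul_comm]

theorem continuous_setAverage_comp_add_smul {f : V → F} (hf : Continuous f) (x : V) :
    Continuous fun r : ℝ ↦ ⨍ y in closedBall 0 1, f (x + r • y) ∂μ := by
  simp_rw [setAverage_eq]
  exact (continuous_parametric_integral_of_continuous (by fun_prop)
    (isCompact_closedBall (0 : V) 1)).const_smul _

theorem tendsto_setAverage_comp_add_smul [CompleteSpace F] {f : V → F} (hf : Continuous f)
    (x : V) :
    Tendsto (fun r : ℝ ↦ ⨍ y in closedBall 0 1, f (x + r • y) ∂μ) (𝓝[>] 0) (𝓝 (f x)) := by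
  have h := (continuous_setAverage_comp_add_smul μ hf x).tendsto 0
  simp only [zero_smul, add_zero] at h
  rw [setAverage_const (measure_closedBall_pos μ 0 one_pos).ne' measure_closedBall_lt_top.ne] at h
  exact h.mono_left nhdsWithin_le_nhds

theorem lipschitzWith_of_ae_norm_fderiv_le [FiniteDimensional ℝ F] {g : V → F}
    (hg : LocallyLipschitz g) {C : ℝ≥0}
    (hd : ∀ᵐ x ∂μ, DifferentiableAt ℝ g x ∧ ‖fderiv ℝ g x‖ ≤ C) : LipschitzWith C g := by
  have : CompleteSpace F := FiniteDimensional.complete ℝ F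
  have norm_average_sub_le (x h : V) (r : ℝ) (hr : 0 < r) :
      ‖⨍ y in closedBall 0 1, g (x + h + r • y) ∂μ - ⨍ y in closedBall 0 1, g (x + r • y) ∂μ‖ ≤
        C * ‖h‖ := by
    have hd' (t : ℝ) : ∀ᵐ y ∂μ.restrict (closedBall 0 1),
        DifferentiableAt ℝ g (x + r • y + t • h) ∧ ‖fderiv ℝ g (x + r • y + t • h)‖ ≤ C := by
      simp_rw [add_right_comm x _ (t • h)]
      exact ae_restrict_of_ae (ae_comp_add_smul μ hd (x + t • h) hr.ne')
    have hasDerivAt (t : ℝ) :=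
      hasDerivAt_setAverage_comp_add_smul (isCompact_closedBall 0 1) hg (a := fun y ↦ x + r • y)
        (b := fun _ ↦ h) (by fun_prop) (by fun_prop) ((hd' t).mono fun _ hy ↦ hy.1)
    have := norm_image_sub_le_of_norm_deriv_le_segment_01'
      (fun t _ ↦ (hasDerivAt t).hasDerivWithinAt) (fun t _ ↦
        norm_setAverage_le_of_ae_norm_le measure_closedBall_lt_top.ne (by positivity)
          ((hd' t).mono fun y hy ↦ (fderiv ℝ g _).le_of_opNorm_le hy.2 h))
    simpa [add_right_comm] using this
  refine LipschitzWith.of_dist_le_mul fun z x ↦ ?_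
  rw [dist_eq_norm, dist_eq_norm]
  refine le_of_tendsto ((tendsto_setAverage_comp_add_smul μ hg.continuous z).sub
    (tendsto_setAverage_comp_add_smul μ hg.continuous x)).norm ?_
  filter_upwards [self_mem_nhdsWithin] with r hr
  simpa using norm_average_sub_le x (z - x) r hr

namespace HasMeanValueProperty

variable {μ} {f g : V → F}

theorem comp_add_right (hf : HasMeanValueProperty μ f) (h : V) :
    HasMeanValueProperty μ fun x ↦ f (x + h) := by
  intro x r hr
  rw [setAverage_closedBall_eq μ _ x hr]
  simp_rw [add_right_comm x _ h]
  rw [← setAverage_closedBall_eq μ f _ hr, hf _ r hr]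

theorem norm_sub_le_of_norm_le (hf : HasMeanValueProperty μ f)
    (hfi : LocallyIntegrable f μ) {C : ℝ} (hC : ∀ x, ‖f x‖ ≤ C) {x y : V} {r : ℝ} (hr : 0 < r)
    (hxy : dist x y ≤ r) :
    ‖f x - f y‖ ≤ 2 * C * (1 - (1 - dist x y / r) ^ finrank ℝ V) := by
  set m := μ.real (ball (0 : V) 1)
  set n := finrank ℝ V
  set ρ := r - dist x y with ρ_def
  have ρ_nonneg : 0 ≤ ρ := sub_nonneg.2 hxy
  have m_pos : 0 < m :=
    ENNReal.toReal_pos (measure_ball_pos μ 0 one_pos).ne' measure_ball_lt_top.ne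
  have norm_integral_sub_le {z : V} (hz : closedBall x ρ ⊆ closedBall z r) :
      ‖(r ^ n * m) • f z - ∫ w in closedBall x ρ, f w ∂μ‖ ≤ C * (r ^ n * m - ρ ^ n * m) := by
    rw [← hf z r hr, setAverage_eq, Measure.addHaar_real_closedBall μ z hr.le,
      smul_inv_smul₀ (by positivity), ← setIntegral_sdiff measurableSet_closedBall
        (hfi.integrableOn_isCompact (isCompact_closedBall z r)) hz]
    refine (norm_setIntegral_le_of_norm_le_const ?_ fun w _ ↦ hC w).trans_eq ?_
    · exact (measure_mono sdiff_subset).trans_lt measure_closedBall_lt_top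
    · rw [measureReal_sdiff hz measurableSet_closedBall measure_closedBall_lt_top.ne,
        Measure.addHaar_real_closedBall μ z hr.le, Measure.addHaar_real_closedBall μ x ρ_nonneg]
  -- The balls of radius `r` about `x` and `y` both contain the ball of radius `ρ` about `x`.
  have hx := norm_integral_sub_le (closedBall_subset_closedBall (sub_le_self r dist_nonneg))
  have hy := norm_integral_sub_le (z := y) (closedBall_subset_closedBall' (by simp [ρ_def]))
  have norm_smul_le : ‖(r ^ n * m) • (f x - f y)‖ ≤
      (r ^ n * m) * (2 * C * (1 - (1 - dist x y / r) ^ n)) := calc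
    _ ≤ C * (r ^ n * m - ρ ^ n * m) + C * (r ^ n * m - ρ ^ n * m) := by
        rw [smul_sub, ← sub_sub_sub_cancel_right _ _ (∫ w in closedBall x ρ, f w ∂μ)]
        exact norm_sub_le_of_le hx hy
    _ = _ := by
        have : ρ = r * (1 - dist x y / r) := by field_simp; rfl
        rw [this, mul_pow]
        ring
  rw [norm_smul, Real.norm_of_nonneg (by positivity)] at norm_smul_le
  exact le_of_mul_le_mul_left norm_smul_le (by positivity)

theorem eq_of_norm_le (hf : HasMeanValueProperty μ f) (hfi : LocallyIntegrable f μ) {C : ℝ}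
    (hC : ∀ x, ‖f x‖ ≤ C) (x y : V) : f x = f y := by
  have tendsto_zero : Tendsto (fun r ↦ 2 * C * (1 - (1 - dist x y / r) ^ finrank ℝ V)) atTop
      (𝓝 0) := by
    have := (tendsto_id.const_div_atTop (dist x y)).const_sub 1
    simpa using ((this.pow (finrank ℝ V)).const_sub 1).const_mul (2 * C)
  refine sub_eq_zero.1 (norm_le_zero_iff.1 (ge_of_tendsto tendsto_zero ?_))
  filter_upwards [eventually_gt_atTop 0, eventually_ge_atTop (dist x y)] with r hr hxy
  exact hf.norm_sub_le_of_norm_le hfi hC hr hxy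

theorem exists_eq_add_continuousLinearMap (hf : HasMeanValueProperty μ f) {C : ℝ≥0}
    (hlip : LipschitzWith C f) : ∃ L : V →L[ℝ] F, ∀ x, f x = f 0 + L x := by
  have hfc := hlip.continuous
  have sub_eq (x h : V) : f (x + h) - f x = f h - f 0 := by
    have := ((hf.comp_add_right h).sub hf
      (Continuous.locallyIntegrable (by fun_prop)) hfc.locallyIntegrable).eq_of_norm_le
      (Continuous.locallyIntegrable (by fun_prop)) (C := C * ‖h‖)
      (fun x ↦ by simpa using hlip.norm_sub_le (x + h) x) x 0
    simpa using this
  let L : V →+ F :=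
    { toFun x := f x - f 0
      map_zero' := sub_self _
      map_add' x y := by rw [← sub_eq x y]; abel }
  exact ⟨L.toRealLinearMap (hfc.sub continuous_const), fun x ↦ (add_sub_cancel _ _).symm⟩

end HasMeanValueProperty

end Averages

-- The function is `(r ^ 2 - dist z x ^ 2)₊`, whose gradient in Euclidean space is radial.
theorem lipschitzWith_sq_sub_sq_min_dist {X : Type*} [PseudoMetricSpace X] (x : X) (r : ℝ≥0) :
    LipschitzWith (2 * r) fun z ↦ (r : ℝ) ^ 2 - min (dist z x) r ^ 2 := by
  have lipschitz_min : LipschitzWith 1 fun z ↦ min (dist z x) (r : ℝ) :=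
    (LipschitzWith.dist_left x).min_const _
  refine LipschitzWith.of_dist_le_mul fun z w ↦ ?_
  have h := lipschitz_min.dist_le_mul z w
  have nonneg (z) : 0 ≤ min (dist z x) (r : ℝ) := le_min dist_nonneg r.2
  have le (z) : min (dist z x) (r : ℝ) ≤ r := min_le_right _ _
  rw [NNReal.coe_one, one_mul, Real.dist_eq] at h
  calc dist ((r : ℝ) ^ 2 - min (dist z x) r ^ 2) (r ^ 2 - min (dist w x) r ^ 2)
      = |min (dist z x) r - min (dist w x) r| * (min (dist z x) r + min (dist w x) r) := by
        rw [dist_sub_left, Real.dist_eq, sq_sub_sq, abs_mul, mul_comm,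
          abs_of_nonneg (add_nonneg (nonneg z) (nonneg w))]
    _ ≤ dist z w * (r + r) := by gcongr <;> apply_rules
    _ = _ := by push_cast; ring

section InnerProductSpace

variable {V : Type*} [NormedAddCommGroup V] [InnerProductSpace ℝ V]

theorem hasGradientAt_sq_sub_sq_min_dist [CompleteSpace V] (x : V) {r : ℝ} {z : V}
    (hz : z ∈ ball x r) :
    HasGradientAt (fun z ↦ r ^ 2 - min (dist z x) r ^ 2) (-(2 : ℝ) • (z - x)) z := by
  have eventually_eq : (fun z ↦ r ^ 2 - min (dist z x) r ^ 2) =ᶠ[𝓝 z]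
      fun z ↦ r ^ 2 - ‖z - x‖ ^ 2 := by
    filter_upwards [isOpen_ball.mem_nhds hz] with w hw
    rw [min_eq_left (mem_ball.1 hw).le, dist_eq_norm]
  have hasFDerivAt := (((hasStrictFDerivAt_norm_sq (z - x)).hasFDerivAt.comp z
    ((hasFDerivAt_id z).sub_const x)).const_sub (r ^ 2)).congr_of_eventuallyEq eventually_eq
  refine hasFDerivAt.congr_fderiv ?_
  ext w
  simp

/-- `A` is a rotation: a linear isometry of determinant `1`. On Euclidean space these are the maps
`v ↦ R v` with `R ∈ SO(k)`, see `isRotation_iff_exists_matrix`. It is a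
finite-dimensional notion: in infinite dimension `det` has the junk value `1`. -/
def IsRotation (A : V →L[ℝ] V) : Prop :=
  (∀ v, ‖A v‖ = ‖v‖) ∧ A.det = 1

namespace IsRotation

variable {A : V →L[ℝ] V}

theorem opNorm_le_one (hA : IsRotation A) : ‖A‖ ≤ 1 :=
  A.opNorm_le_bound zero_le_one fun v ↦ by rw [hA.1 v, one_mul]

variable [FiniteDimensional ℝ V]

-- The linear term of `det` at `A` is `⟪cof A p, v⟫`, and a rotation is its own cofactor matrix.
theorem det_add_smulRight (hA : IsRotation A) (p v : V) :
    (A + (innerSL ℝ p).smulRight v).det = 1 + ⟪A p, v⟫ := by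
  let e : V ≃ₗᵢ[ℝ] V := LinearIsometry.toLinearIsometryEquiv ⟨A, hA.1⟩ rfl
  have e_symm_apply (w : V) : A (e.symm w) = w := e.apply_symm_apply w
  have factor : ((A + (innerSL ℝ p).smulRight v : V →L[ℝ] V) : V →ₗ[ℝ] V) =
      (A : V →ₗ[ℝ] V) ∘ₗ LinearMap.transvection (innerₛₗ ℝ p) (e.symm v) := by
    ext w
    simp [LinearMap.transvection.apply, e_symm_apply]
  calc (A + (innerSL ℝ p).smulRight v).det
      = A.det * (LinearMap.transvection (innerₛₗ ℝ p) (e.symm v)).det := by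
        rw [ContinuousLinearMap.det, factor, LinearMap.det_comp]
    _ = 1 + ⟪p, e.symm v⟫ := by
        rw [hA.2, one_mul, LinearMap.transvection.det]; rfl
    _ = 1 + ⟪A p, v⟫ := by
        rw [← e.inner_map_map, e.apply_symm_apply]; rfl

end IsRotation

variable [FiniteDimensional ℝ V] [MeasurableSpace V] [BorelSpace V] {μ : Measure V}
  {g : V → V}

theorem integrableOn_fderiv_gradient {C D : ℝ≥0} (hg : LipschitzWith C g) {ψ : V → ℝ}
    (hψ : LipschitzWith D ψ) {s : Set V} (hs : μ s ≠ ⊤) :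
    IntegrableOn (fun x ↦ fderiv ℝ g x (∇ ψ x)) s μ := by
  have measurable_gradient : Measurable (∇ ψ) :=
    (InnerProductSpace.toDual ℝ V).symm.continuous.measurable.comp (measurable_fderiv ℝ ψ)
  refine .of_bound hs.lt_top (isBoundedBilinearMap_apply.continuous.measurable.comp
    ((measurable_fderiv ℝ g).prodMk measurable_gradient)).aestronglyMeasurable (C * D)
    (.of_forall fun x ↦ ?_)
  refine (fderiv ℝ g x).le_of_opNorm_le_of_le (norm_fderiv_le_of_lipschitz ℝ hg) ?_
  rw [gradient, LinearIsometryEquiv.norm_map]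
  exact norm_fderiv_le_of_lipschitz ℝ hψ

variable [μ.IsAddHaarMeasure]

theorem setIntegral_fderiv_gradient_eq_zero {C D : ℝ≥0} (hg : LipschitzWith C g)
    (hrot : ∀ᵐ x ∂μ, IsRotation (fderiv ℝ g x)) {ψ : V → ℝ} (hψ : LipschitzWith D ψ)
    {s : Set V} (hs : MeasurableSet s) (hμs : μ s ≠ ⊤) (hψs : EqOn ψ 0 sᶜ) :
    ∫ x in s, fderiv ℝ g x (∇ ψ x) ∂μ = 0 := by
  have integrable := integrableOn_fderiv_gradient hg hψ hμs
  refine ext_inner_right ℝ fun v ↦ ?_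
  rw [inner_zero_left, real_inner_comm, ← integral_inner integrable]
  have lipschitz_smul : LipschitzWith (‖v‖₊ * D) fun x ↦ ψ x • v :=
    LipschitzWith.of_dist_le_mul fun x y ↦ by
      rw [dist_eq_norm, ← sub_smul, norm_smul, ← dist_eq_norm, mul_comm, NNReal.coe_mul,
        coe_nnnorm, mul_assoc]
      gcongr
      exact hψ.dist_le_mul x y
  have det_perturbed : ∀ᵐ x ∂μ,
      (fderiv ℝ (fun x ↦ g x + ψ x • v) x).det = 1 + ⟪fderiv ℝ g x (∇ ψ x), v⟫ := by
    filter_upwards [hrot, hg.ae_differentiableAt, hψ.ae_differentiableAt] with x hx hgx hψx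
    have hasFDerivAt : HasFDerivAt (fun x ↦ g x + ψ x • v)
        (fderiv ℝ g x + (innerSL ℝ (∇ ψ x)).smulRight v) x :=
      hgx.hasFDerivAt.add (hψx.hasGradientAt.hasFDerivAt.smul_const v)
    rw [hasFDerivAt.fderiv, hx.det_add_smulRight]
  have integral_det_eq := setIntegral_det_fderiv_eq_of_eqOn_compl (μ := μ)
    (hg.add lipschitz_smul) (hg.weaken le_self_add) hs hμs fun x hx ↦ by simp [hψs hx]
  rw [integral_congr_ae (ae_restrict_of_ae det_perturbed),
    integral_congr_ae (g := fun _ ↦ 1) (ae_restrict_of_ae (hrot.mono fun x hx ↦ hx.2)),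
    integral_add (f := fun _ ↦ (1 : ℝ)) (integrableOn_const hμs) (integrable.inner_const v),
    add_eq_left] at integral_det_eq
  simpa [real_inner_comm] using integral_det_eq

theorem setIntegral_closedBall_fderiv_sub_eq_zero {C : ℝ≥0} (hg : LipschitzWith C g)
    (hrot : ∀ᵐ x ∂μ, IsRotation (fderiv ℝ g x)) (x : V) {r : ℝ} (hr : 0 < r) :
    ∫ z in closedBall x r, fderiv ℝ g z (z - x) ∂μ = 0 := by
  lift r to ℝ≥0 using hr.le
  have integral_eq_zero := setIntegral_fderiv_gradient_eq_zero hg hrot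
    (lipschitzWith_sq_sub_sq_min_dist x r) measurableSet_closedBall
    measure_closedBall_lt_top.ne fun z hz ↦ by
      have : (r : ℝ) < dist z x := by simpa using hz
      simp [min_eq_right this.le]
  have gradient_eq : ∀ᵐ z ∂μ.restrict (closedBall x r),
      ∇ (fun z ↦ (r : ℝ) ^ 2 - min (dist z x) r ^ 2) z = -(2 : ℝ) • (z - x) := by
    have not_mem_sphere : ∀ᵐ z ∂μ, z ∉ sphere x (r : ℝ) :=
      measure_eq_zero_iff_ae_notMem.1 (Measure.addHaar_sphere_of_ne_zero μ x hr.ne')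
    filter_upwards [ae_restrict_mem measurableSet_closedBall,
      ae_restrict_of_ae not_mem_sphere] with z hz hz'
    exact (hasGradientAt_sq_sub_sq_min_dist x (lt_of_le_of_ne hz hz')).gradient
  rw [integral_congr_ae (gradient_eq.mono fun z hz ↦ congrArg (fderiv ℝ g z) hz)]
    at integral_eq_zero
  simpa [integral_neg, integral_smul] using integral_eq_zero

theorem hasDerivAt_zero_setAverage_of_ae_isRotation_fderiv {C : ℝ≥0} (hg : LipschitzWith C g)
    (hrot : ∀ᵐ x ∂μ, IsRotation (fderiv ℝ g x)) (x : V) {r : ℝ} (hr : 0 < r) :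
    HasDerivAt (fun r : ℝ ↦ ⨍ y in closedBall 0 1, g (x + r • y) ∂μ) 0 r := by
  have radial_average : r • ⨍ y in closedBall 0 1, fderiv ℝ g (x + r • y) y ∂μ = 0 := calc
    _ = ⨍ y in closedBall 0 1, fderiv ℝ g (x + r • y) (x + r • y - x) ∂μ := by
      simp_rw [add_sub_cancel_left, map_smul, average_eq, integral_smul, smul_comm r]
    _ = ⨍ z in closedBall x r, fderiv ℝ g z (z - x) ∂μ :=
      (setAverage_closedBall_eq μ (fun z ↦ fderiv ℝ g z (z - x)) x hr).symm
    _ = 0 := by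
      rw [setAverage_eq, setIntegral_closedBall_fderiv_sub_eq_zero hg hrot x hr, smul_zero]
  have hasDerivAt := hasDerivAt_setAverage_comp_add_smul (ν := μ) (isCompact_closedBall 0 1)
    hg.locallyLipschitz (a := fun _ ↦ x) continuous_const continuous_id
    (ae_restrict_of_ae (ae_comp_add_smul μ hg.ae_differentiableAt x hr.ne'))
  simpa [(smul_eq_zero_iff_right hr.ne').1 radial_average] using hasDerivAt

theorem hasMeanValueProperty_of_ae_isRotation_fderiv {C : ℝ≥0} (hg : LipschitzWith C g)
    (hrot : ∀ᵐ x ∂μ, IsRotation (fderiv ℝ g x)) : HasMeanValueProperty μ g := by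
  intro x r hr
  have hasDerivAt_zero {t : ℝ} (ht : 0 < t) :=
    hasDerivAt_zero_setAverage_of_ae_isRotation_fderiv hg hrot x ht
  rw [setAverage_closedBall_eq μ g x hr]
  refine tendsto_nhds_unique (tendsto_const_nhds.congr' ?_)
    (tendsto_setAverage_comp_add_smul μ hg.continuous x)
  filter_upwards [self_mem_nhdsWithin] with t ht
  exact isOpen_Ioi.is_const_of_deriv_eq_zero isPreconnected_Ioi
    (fun t ht ↦ (hasDerivAt_zero ht).differentiableAt.differentiableWithinAt)
    (fun t ht ↦ (hasDerivAt_zero ht).deriv) hr ht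

end InnerProductSpace

theorem isRotation_iff_exists_matrix {k : ℕ} (A : E k →L[ℝ] E k) :
    IsRotation A ↔ ∃ R : Matrix (Fin k) (Fin k) ℝ, R * Rᵀ = 1 ∧ R.det = 1 ∧
      ∀ v, A v = mulVecE R v := by
  obtain ⟨R, rfl⟩ : ∃ R, toEuclideanCLM (𝕜 := ℝ) R = A := EquivLike.surjective _ A
  have toEuclideanCLM_injective := EquivLike.injective (toEuclideanCLM (n := Fin k) (𝕜 := ℝ))
  have eq_iff (S : Matrix (Fin k) (Fin k) ℝ) :
      (∀ v, toEuclideanCLM (𝕜 := ℝ) R v = mulVecE S v) ↔ S = R := by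
    rw [← toEuclideanCLM_injective.eq_iff, eq_comm, ContinuousLinearMap.ext_iff]
    rfl
  have det_eq : (toEuclideanCLM (𝕜 := ℝ) R).det = R.det := LinearMap.det_toLpLin _ _
  have isometry_iff : (∀ v, ‖toEuclideanCLM (𝕜 := ℝ) R v‖ = ‖v‖) ↔ R * Rᵀ = 1 := by
    rw [ContinuousLinearMap.norm_map_iff_adjoint_comp_self, mul_eq_one_comm,
      ← toEuclideanCLM_injective.eq_iff, map_mul, map_one,
      ← conjTranspose_eq_transpose_of_trivial, ← star_eq_conjTranspose, map_star]
    rfl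
  simp only [IsRotation, isometry_iff, det_eq, eq_iff, ← and_assoc, exists_eq_right]

theorem locally_lipschitz_ae_rotation_deriv_rigid_general {V : Type*} [NormedAddCommGroup V]
    [InnerProductSpace ℝ V] [FiniteDimensional ℝ V] [MeasurableSpace V] [BorelSpace V]
    (μ : Measure V) [μ.IsAddHaarMeasure] {g : V → V} (hg : LocallyLipschitz g)
    (hrot : ∀ᵐ x ∂μ, DifferentiableAt ℝ g x ∧ IsRotation (fderiv ℝ g x)) :
    ∃ Q : V →L[ℝ] V, IsRotation Q ∧ ∀ x, g x = g 0 + Q x := by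
  have lipschitz : LipschitzWith 1 g := lipschitzWith_of_ae_norm_fderiv_le μ hg
    (hrot.mono fun x hx ↦ ⟨hx.1, hx.2.opNorm_le_one⟩)
  have mean_value : HasMeanValueProperty μ g :=
    hasMeanValueProperty_of_ae_isRotation_fderiv lipschitz (hrot.mono fun x hx ↦ hx.2)
  obtain ⟨Q, hQ⟩ := mean_value.exists_eq_add_continuousLinearMap lipschitz
  obtain ⟨x, -, hx⟩ := hrot.exists
  have fderiv_eq : fderiv ℝ g x = Q := by
    rw [funext hQ]
    exact (Q.hasFDerivAt.const_add _).fderiv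
  exact ⟨Q, fderiv_eq ▸ hx, hQ⟩

/-- **Lemma `lem:lipschitz` (4)** (Liouville-type rigidity): a locally Lipschitz map
`g : ℝ^k → ℝ^k` (`k ≥ 2`) whose Jacobian lies in `SO(k)` almost everywhere is a rigid motion,
`g(x) = a + Qx` with `Q ∈ SO(k)`. -/
theorem locally_lipschitz_ae_rotation_deriv_rigid
    (k : ℕ) (hk : 2 ≤ k)
    (g : E k → E k) (hg : LocallyLipschitz g)
    (hQ : ∀ᵐ x : E k, DifferentiableAt ℝ g x ∧
      ∃ R : Matrix (Fin k) (Fin k) ℝ, R * Rᵀ = 1 ∧ R.det = 1 ∧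
        ∀ v : E k, fderiv ℝ g x v = mulVecE R v) :
    ∃ (a : E k) (Q : Matrix (Fin k) (Fin k) ℝ), Q * Qᵀ = 1 ∧ Q.det = 1 ∧
      ∀ x : E k, g x = a + mulVecE Q x := by
  obtain ⟨L, hL, hgL⟩ := locally_lipschitz_ae_rotation_deriv_rigid_general volume hg
    (by simpa only [isRotation_iff_exists_matrix] using hQ)
  obtain ⟨Q, Q_orthogonal, Q_det, hLQ⟩ := (isRotation_iff_exists_matrix L).1 hL
  exact ⟨g 0, Q, Q_orthogonal, Q_det, fun x ↦ by rw [hgL x, hLQ]⟩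
end
end

section
/- Let p, L ≥ 1, let Φ⁽¹⁾ ∈ ℝ^{p×p}, a ∈ ℝ^p, and let n⁽¹⁾ = 0, n⁽²⁾, …, n⁽ᴸ⁾ ∈ ℝ^p. Define Φ⁽ˡ⁾ := Φ⁽¹⁾ + n⁽ˡ⁾ aᵀ for ℓ ∈ {1, …, L}, and suppose det Φ⁽ˡ⁾ > 0 for every ℓ. Then for all μ₁, …, μ_L ≥ 0 with Σ_ℓ μ_ℓ = 1, det(Σ_{ℓ=1}^L μ_ℓ Φ⁽ˡ⁾) > 0. -/
open Matrix

noncomputable section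

/-!
Bordering the matrix, `det (A + u aᵀ)` is the determinant of `[[A, u], [-aᵀ, 1]]`, which is linear
in its last column `(u, 1)`. A combination of such columns with weights of sum `1` again has last
entry `1`, so `u ↦ det (A + u aᵀ)` preserves affine combinations. A convex combination of
matrices `A + u aᵀ` therefore has as determinant the same convex combination of their
determinants.
-/

section CommRing

variable {R m ι : Type*} [CommRing R] [Fintype m] [DecidableEq m]

theorem det_add_vecMulVec_eq_cramer (A : Matrix m m R) (u a : m → R) :
    (A + vecMulVec u a).det =
      cramer (fromBlocks A 0 (replicateRow Unit (-a)) 0) (Sum.elim u 1) (Sum.inr ()) := by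
  have border : (fromBlocks A 0 (replicateRow Unit (-a)) 0).updateCol (Sum.inr ()) (Sum.elim u 1) =
      fromBlocks A (replicateCol Unit u) (replicateRow Unit (-a)) 1 := by
    ext (i | i) (j | j) <;> simp
  rw [cramer_apply, border, det_fromBlocks_one₂₂, ← vecMulVec_eq, vecMulVec_neg, sub_neg_eq_add]

theorem det_add_vecMulVec_sum_smul (A : Matrix m m R) (a : m → R) (u : ι → m → R)
    {s : Finset ι} {w : ι → R} (hw : ∑ i ∈ s, w i = 1) :
    (A + vecMulVec (∑ i ∈ s, w i • u i) a).det =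
      ∑ i ∈ s, w i * (A + vecMulVec (u i) a).det := by
  have column : (Sum.elim (∑ i ∈ s, w i • u i) 1 : m ⊕ Unit → R) =
      ∑ i ∈ s, w i • Sum.elim (u i) 1 := by
    ext (j | j) <;> simp [hw]
  simp only [det_add_vecMulVec_eq_cramer, column, map_sum, map_smul, Finset.sum_apply,
    Pi.smul_apply, smul_eq_mul]

end CommRing

theorem sum_smul_add_vecMulVec {R m k ι : Type*} [Semiring R] (A : Matrix m k R) (a : k → R)
    (u : ι → m → R) {s : Finset ι} {w : ι → R} (hw : ∑ i ∈ s, w i = 1) :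
    ∑ i ∈ s, w i • (A + vecMulVec (u i) a) = A + vecMulVec (∑ i ∈ s, w i • u i) a := by
  have rank_one : ∑ i ∈ s, w i • vecMulVec (u i) a = vecMulVec (∑ i ∈ s, w i • u i) a := by
    ext j l
    simp [Matrix.sum_apply, vecMulVec_apply, Finset.sum_mul, mul_assoc]
  simp only [smul_add, Finset.sum_add_distrib, ← Finset.sum_smul, hw, one_smul, rank_one]

theorem sum_mul_pos_of_sum_eq_one {R ι : Type*} [Semiring R] [PartialOrder R]
    [IsStrictOrderedRing R] {s : Finset ι} {w x : ι → R} (hw₀ : ∀ i ∈ s, 0 ≤ w i)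
    (hw₁ : ∑ i ∈ s, w i = 1) (hx : ∀ i ∈ s, 0 < x i) : 0 < ∑ i ∈ s, w i * x i := by
  obtain ⟨i, hi, hwi⟩ : ∃ i ∈ s, w i ≠ 0 :=
    Finset.exists_ne_zero_of_sum_ne_zero (hw₁ ▸ one_ne_zero)
  exact Finset.sum_pos' (fun j hj ↦ mul_nonneg (hw₀ j hj) (hx j hj).le)
    ⟨i, hi, mul_pos ((hw₀ i hi).lt_of_ne' hwi) (hx i hi)⟩

theorem det_pos_convex_combination_common_rank_one_direction_general
    {R m ι : Type*} [CommRing R] [PartialOrder R] [IsStrictOrderedRing R]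
    [Fintype m] [DecidableEq m] {s : Finset ι} (A : Matrix m m R) (a : m → R) (u : ι → m → R)
    (hdet : ∀ i ∈ s, 0 < (A + vecMulVec (u i) a).det)
    {w : ι → R} (hw₀ : ∀ i ∈ s, 0 ≤ w i) (hw₁ : ∑ i ∈ s, w i = 1) :
    0 < (∑ i ∈ s, w i • (A + vecMulVec (u i) a)).det := by
  rw [sum_smul_add_vecMulVec A a u hw₁, det_add_vecMulVec_sum_smul A a u hw₁]
  exact sum_mul_pos_of_sum_eq_one hw₀ hw₁ hdet

/-- **Convex combinations of rank-one perturbations** (threshold affine case of the proof of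
Proposition `prop:pwacondition`): if `Φ⁽ˡ⁾ = Φ⁽¹⁾ + n⁽ˡ⁾ aᵀ` with `n⁽¹⁾ = 0` and every
`det Φ⁽ˡ⁾ > 0`, then every convex combination of the `Φ⁽ˡ⁾` has strictly positive
determinant. -/
theorem det_pos_convex_combination_common_rank_one_direction
    (p L : ℕ) (hp : 1 ≤ p) (hL : 1 ≤ L)
    (Φ₁ : Matrix (Fin p) (Fin p) ℝ) (a : Fin p → ℝ)
    (n : Fin L → (Fin p → ℝ)) (hn0 : n ⟨0, hL⟩ = 0)
    (Φ : Fin L → Matrix (Fin p) (Fin p) ℝ)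
    (hΦ : ∀ ℓ, Φ ℓ = Φ₁ + Matrix.vecMulVec (n ℓ) a)
    (hdet : ∀ ℓ, 0 < (Φ ℓ).det) :
    ∀ μ : Fin L → ℝ, (∀ ℓ, 0 ≤ μ ℓ) → (∑ ℓ, μ ℓ) = 1 →
      0 < (∑ ℓ, μ ℓ • Φ ℓ).det := by
  intro μ hμ₀ hμ₁
  simp only [hΦ] at hdet ⊢
  exact det_pos_convex_combination_common_rank_one_direction_general Φ₁ a n
    (fun ℓ _ ↦ hdet ℓ) (fun ℓ _ ↦ hμ₀ ℓ) hμ₁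
end
end

section
/- Let p ≥ 1 and let ψᵢ⁺, ψᵢ⁻ ∈ ℝ^p for i = 1, …, p. Suppose that for every sign vector s ∈ {−1, +1}^p, the p × p matrix whose i-th column is ψᵢ⁺ if sᵢ = +1 and ψᵢ⁻ if sᵢ = −1 has strictly positive determinant. Then for every μ = (μ₁, …, μ_p) ∈ [0, 1]^p, the p × p matrix whose i-th column is μᵢψᵢ⁺ + (1 − μᵢ)ψᵢ⁻ has strictly positive determinant. -/
open Matrix

noncomputable section

/-! A multilinear map is linear in each argument, so the values of one argument that send it into a
fixed convex set form a convex set. Freeing the arguments one at a time, membership of the value in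
that convex set passes from the vertices to their convex hulls. Apply this to the determinant, which
is multilinear in the columns, and the convex set `(0, ∞)`. -/

theorem multilinearMap_apply_mem_of_forall_mem_convexHull {ι R F : Type*} {E : ι → Type*}
    [Finite ι] [Semiring R] [PartialOrder R] [∀ i, AddCommMonoid (E i)] [∀ i, Module R (E i)]
    [AddCommMonoid F] [Module R F] (f : MultilinearMap R E F) {s : ∀ i, Set (E i)} {C : Set F}
    (hC : Convex R C) (hf : ∀ m, (∀ i, m i ∈ s i) → f m ∈ C)
    {m : ∀ i, E i} (hm : ∀ i, m i ∈ convexHull R (s i)) : f m ∈ C := by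
  classical
  cases nonempty_fintype ι
  suffices mem_of_mem_hull_on : ∀ (t : Finset ι) (m : ∀ i, E i),
      (∀ i ∈ t, m i ∈ convexHull R (s i)) → (∀ i ∉ t, m i ∈ s i) → f m ∈ C from
    mem_of_mem_hull_on Finset.univ m (fun i _ => hm i) (fun i hi => absurd (Finset.mem_univ i) hi)
  intro t
  induction t using Finset.induction_on with
  | empty => exact fun m _ hm => hf m fun i => hm i (Finset.notMem_empty i)
  | insert a t ha ih =>
    intro m hull vertex
    have slice_convex : Convex R {x | f (Function.update m a x) ∈ C} :=
      hC.linear_preimage (f.toLinearMap m a)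
    have vertices_subset_slice : s a ⊆ {x | f (Function.update m a x) ∈ C} := by
      intro x hx
      refine ih _ (fun i hi => ?_) (fun i hi => ?_)
      · rw [Function.update_of_ne (ne_of_mem_of_not_mem hi ha)]
        exact hull i (Finset.mem_insert_of_mem hi)
      · obtain rfl | hia := eq_or_ne i a
        · rwa [Function.update_self]
        · rw [Function.update_of_ne hia]
          exact vertex i (by simp [hia, hi])
    have mem_slice : f (Function.update m a (m a)) ∈ C :=
      convexHull_min vertices_subset_slice slice_convex (hull a (Finset.mem_insert_self a t))
    rwa [Function.update_eq_self] at mem_slice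

theorem det_pos_columnwise_convex_combination_general {ι R : Type*} {κ : ι → Type*}
    [Fintype ι] [DecidableEq ι] [CommRing R] [PartialOrder R] [IsStrictOrderedRing R]
    (v : ∀ j, κ j → ι → R) (hv : ∀ k : ∀ j, κ j, 0 < (Matrix.of fun i j => v j (k j) i).det)
    {A : Matrix ι ι R} (hA : ∀ j, A.col j ∈ convexHull R (Set.range (v j))) : 0 < A.det := by
  rw [← det_transpose]
  refine multilinearMap_apply_mem_of_forall_mem_convexHull
    (detRowAlternating (R := R) (n := ι)).toMultilinearMap (convex_Ioi 0) (fun m hm => ?_) hA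
  choose k hk using hm
  obtain rfl : (fun j => v j (k j)) = m := funext hk
  exact (hv k).trans_eq (det_transpose _).symm

/-- **Columnwise convex combinations preserve positive determinants** (piecewise linear case of
the proof of Proposition `prop:pwacondition`): if every matrix whose `i`-th column is chosen
from `{ψᵢ⁺, ψᵢ⁻}` has strictly positive determinant, then so does every matrix whose `i`-th
column is `μᵢ ψᵢ⁺ + (1 − μᵢ) ψᵢ⁻` with `μᵢ ∈ [0,1]`.
(A sign vector `s ∈ {−1,+1}^p` is encoded as `s : Fin p → Bool`, with `true` standing for `+1`.) -/
theorem det_pos_columnwise_convex_combination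
    (p : ℕ) (hp : 1 ≤ p)
    (ψp ψm : Fin p → (Fin p → ℝ))
    (hsign : ∀ s : Fin p → Bool,
      0 < (Matrix.of fun i j => if s j then ψp j i else ψm j i).det) :
    ∀ μ : Fin p → ℝ, (∀ i, μ i ∈ Set.Icc (0 : ℝ) 1) →
      0 < (Matrix.of fun i j => μ j * ψp j i + (1 - μ j) * ψm j i).det := by
  refine fun μ hμ => det_pos_columnwise_convex_combination_general
    (v := fun j (b : Bool) i => if b then ψp j i else ψm j i) hsign fun j => ?_
  exact segment_subset_convexHull (Set.mem_range_self true) (Set.mem_range_self false)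
    ⟨μ j, 1 - μ j, (hμ j).1, sub_nonneg.2 (hμ j).2, add_sub_cancel _ _, rfl⟩
end
end

section
/- Let p, L ≥ 1 and let Φ⁽¹⁾, …, Φ⁽ᴸ⁾ ∈ ℝ^{p×p} be such that every matrix in their convex hull is invertible. Suppose f : ℝ^p → ℝ^p has the property that for every x′, x″ ∈ ℝ^p there exists a matrix M in the convex hull of {Φ⁽¹⁾, …, Φ⁽ᴸ⁾} with f(x″) − f(x′) = M(x″ − x′). Then there exist constants 0 < c ≤ C < ∞ such that c‖x″ − x′‖ ≤ ‖f(x″) − f(x′)‖ ≤ C‖x″ − x′‖ for all x′, x″ ∈ ℝ^p; in particular f is injective and bi-Lipschitz onto its image. -/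
open Matrix

noncomputable section

/-!
A single operator `T` with `c * ‖x‖ ≤ ‖T x‖` passes the bound `c / 2` on to every operator within
`c / 2` of it in operator norm. By compactness, finitely many such balls cover a compact set of
operators that are each bounded below, so one lower bound serves the whole set; compactness also
bounds the operator norms from above. Every difference `f x'' - f x'` inherits both bounds.
-/

section BoundedBelow

variable {𝕜 V W : Type*} [NontriviallyNormedField 𝕜] [SeminormedAddCommGroup V] [NormedSpace 𝕜 V]
  [SeminormedAddCommGroup W] [NormedSpace 𝕜 W]

theorem sub_mul_norm_le_norm_apply {S T : V →L[𝕜] W} {c d : ℝ}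
    (hT : ∀ x, c * ‖x‖ ≤ ‖T x‖) (hST : ‖T - S‖ ≤ d) (x : V) :
    (c - d) * ‖x‖ ≤ ‖S x‖ := by
  have hdiff : ‖T x - S x‖ ≤ d * ‖x‖ := (T - S).le_of_opNorm_le hST x
  linarith [hT x, norm_sub_norm_le (T x) (S x)]

theorem exists_forall_mul_norm_le_of_isCompact {K : Set (V →L[𝕜] W)} (hK : IsCompact K)
    (hbelow : ∀ T ∈ K, ∃ k, AntilipschitzWith k T) :
    ∃ c > 0, ∀ T ∈ K, ∀ x, c * ‖x‖ ≤ ‖T x‖ := by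
  refine hK.induction_on (p := fun s ↦ ∃ c > 0, ∀ T ∈ s, ∀ x, c * ‖x‖ ≤ ‖T x‖)
    ⟨1, one_pos, by simp⟩ ?mono ?union ?locally
  case mono =>
    rintro s t hst ⟨c, hc, ht⟩
    exact ⟨c, hc, fun T hT ↦ ht T (hst hT)⟩
  case union =>
    rintro s t ⟨a, ha, hs⟩ ⟨b, hb, ht⟩
    refine ⟨min a b, lt_min ha hb, ?_⟩
    rintro T (hT | hT) x
    · exact le_trans (by gcongr; exact min_le_left a b) (hs T hT x)
    · exact le_trans (by gcongr; exact min_le_right a b) (ht T hT x)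
  case locally =>
    intro T hT
    obtain ⟨c, hc, hTc⟩ := antilipschitzWith_iff_exists_mul_le_norm.mp (hbelow T hT)
    refine ⟨Metric.ball T (c / 2),
      mem_nhdsWithin_of_mem_nhds (Metric.ball_mem_nhds T (half_pos hc)),
      c - c / 2, by linarith, fun S hS ↦ sub_mul_norm_le_norm_apply hTc ?_⟩
    exact (mem_ball_iff_norm'.mp hS).le

theorem exists_antilipschitzWith_of_isUnit {T : V →L[𝕜] V} (hT : IsUnit T) :
    ∃ k, AntilipschitzWith k T := by
  obtain ⟨u, rfl⟩ := hT
  have hinverse : Function.LeftInverse (↑u⁻¹ : V →L[𝕜] V) u := fun x ↦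
    DFunLike.congr_fun u.inv_mul x
  exact ⟨_, (↑u⁻¹ : V →L[𝕜] V).lipschitz.to_rightInverse hinverse⟩

end BoundedBelow

theorem continuous_toEuclideanCLM {𝕜 n : Type*} [RCLike 𝕜] [Fintype n] [DecidableEq n] :
    Continuous (toEuclideanCLM (n := n) (𝕜 := 𝕜)) :=
  (toEuclideanCLM (n := n) (𝕜 := 𝕜)).toAlgEquiv.toLinearMap.continuous_of_finiteDimensional

theorem convex_hull_difference_biLipschitz_general {𝕜 V W : Type*}
    [NontriviallyNormedField 𝕜] [NormedAddCommGroup V] [NormedSpace 𝕜 V]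
    [SeminormedAddCommGroup W] [NormedSpace 𝕜 W]
    {K : Set (V →L[𝕜] W)} (hK : IsCompact K) (hbelow : ∀ T ∈ K, ∃ k, AntilipschitzWith k T)
    {f : V → W}
    (hf : ∀ x' x'' : V, ∃ T ∈ K, f x'' - f x' = T (x'' - x')) :
    ∃ c C : ℝ, 0 < c ∧ c ≤ C ∧
      (∀ x' x'' : V,
        c * ‖x'' - x'‖ ≤ ‖f x'' - f x'‖ ∧ ‖f x'' - f x'‖ ≤ C * ‖x'' - x'‖) ∧
      Function.Injective f := by
  obtain ⟨c, hc, hlower⟩ := exists_forall_mul_norm_le_of_isCompact hK hbelow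
  obtain ⟨C, hupper⟩ := hK.isBounded.exists_norm_le
  refine ⟨c, max c C, hc, le_max_left c C, fun x' x'' ↦ ?bounds, fun x y hxy ↦ ?injective⟩
  case bounds =>
    obtain ⟨T, hT, hfT⟩ := hf x' x''
    rw [hfT]
    exact ⟨hlower T hT _, T.le_of_opNorm_le (le_max_of_le_right (hupper T hT)) _⟩
  case injective =>
    obtain ⟨T, hT, hfT⟩ := hf y x
    have hle : c * ‖x - y‖ ≤ 0 := by simpa [← hfT, hxy] using hlower T hT (x - y)
    rw [← sub_eq_zero, ← norm_le_zero_iff]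
    exact nonpos_of_mul_nonpos_right hle hc

/-- **Bi-Lipschitz bounds from the convex-hull mean-value property** (used in the proof of
Proposition `prop:pwacondition`): if every matrix in the convex hull of `{Φ⁽¹⁾, …, Φ⁽ᴸ⁾}` is
invertible, and every difference `f(x″) − f(x′)` equals `M (x″ − x′)` for some `M` in that
hull, then `f` satisfies two-sided Lipschitz bounds; in particular it is injective. -/
theorem convex_hull_difference_biLipschitz
    (p L : ℕ) (hp : 1 ≤ p) (hL : 1 ≤ L)
    (Φ : Fin L → Matrix (Fin p) (Fin p) ℝ)
    (hinv : ∀ M ∈ convexHull ℝ (Set.range Φ), IsUnit M)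
    (f : E p → E p)
    (hf : ∀ x' x'' : E p, ∃ M ∈ convexHull ℝ (Set.range Φ),
      f x'' - f x' = mulVecE M (x'' - x')) :
    ∃ c C : ℝ, 0 < c ∧ c ≤ C ∧
      (∀ x' x'' : E p,
        c * ‖x'' - x'‖ ≤ ‖f x'' - f x'‖ ∧ ‖f x'' - f x'‖ ≤ C * ‖x'' - x'‖) ∧
      Function.Injective f := by
  exact convex_hull_difference_biLipschitz_general
    (((Set.finite_range Φ).isCompact_convexHull ℝ).image continuous_toEuclideanCLM)
    (Set.forall_mem_image.mpr fun M hM ↦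
      exists_antilipschitzWith_of_isUnit ((hinv M hM).map toEuclideanCLM))
    fun x' x'' ↦ Set.exists_mem_image.mpr (hf x' x'')
end
end
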